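/- arXiv:2603.19614 — 2 statements merged into one kernel-verified Lean document; each statement's English description precedes it below -/
import Mathlib

section
/- Let n ≥ 3 and α ≥ 0, or n = 2 and α > 0; let 0 < μ < μ*(n,α), p = p_S(n+μ,α), and q := (n−μ−1)/2 − 1/p. Then there exists a constant C > 0 such that for all t ≥ 1 and all x with |x| ≤ t+1: |∂_t b_q(t,x)| ≤ C t^{μ/2 − (n−1)/2} (t+2−|x|)^{1/p − 1}. -/
/-!
Write `r = 1/p`, `m = (n-1)/2`, `X = ‖x‖` and `D = t + 2 - X`, so that `q = m - μ/2 - r`.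
The derivative is estimated through a local Lipschitz bound: if
`|b_q(s,x) - b_q(t,x)| ≤ M |s - t|` for `s` near `t`, then `|∂_t b_q(t,x)| ≤ M`
(`norm_deriv_le_of_lip'`), so no differentiation under the integral is needed.

* Exponents (`exponent_facts`). Since `n + 1 - μ* = 2n/(n+2+α)`, the hypothesis `μ < μ*`
  forces `r < n/(n+2+α) < 1`. Together with the quadratic equation satisfied by `r` this gives
  that `q + 1`, `q + μ` and `q + μ/2` are positive; these are exactly the conditions for the
  `λ`-integrals below to converge at `λ = 0`.
* The spherical integral (`phi_bound`): `φ(x) ≲ (1+‖x‖)^{-m} e^{‖x‖}`. A Gaussian centred at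
  `R x/‖x‖`, with `R` comparable to `√‖x‖`, has total mass independent of `x`; in polar
  coordinates its restriction to the shell `R < r ≤ R + 1` is at least
  `c R^{n-1} e^{-‖x‖} φ(x)`.
* The Bessel function (`besselK_bound`, `besselK_lipschitz`, `hEPD_lipschitz`). From the integral
  representation, `K_ν(s) ≲ e^{-s} (s^{-1/2} + s^{-a})` for any `a > |ν|`, and the Lipschitz
  constant of `K_ν` on `[s,∞)` has the same bound with `a + 1` in place of `a`. Taking
  `a > |ν|` instead of `a = |ν|` avoids a logarithm when `ν = 0`.
* The product (`kernel_bound`, `le_domFun`, `domFun_integral`). The factor `e^{-λt}` of `h` and the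
  bound for `φ(λx)` combine to `(1+λt)^{-m} e^{-λD/2}`, uniformly for `0 < λ ≤ 1`. For `λt ≥ 1`
  what remains is at most `t^{μ/2-m} λ^{-r} e^{-λD/2}`, whose integral is a multiple of
  `t^{μ/2-m} D^{r-1}`; the part `λt ≤ 1` contributes a multiple of `t^{μ/2-m} t^{r-1}`, which
  is no larger up to a constant, because `D ≤ t + 2 ≤ 3t` and `r < 1`.
-/

noncomputable section

open MeasureTheory
open scoped RealInnerProductSpace

/-- `γ(n,μ,α,p) = 2+(n+μ+1+2α)p−(n+μ−1)p²`. -/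
def gam (n μ α p : ℝ) : ℝ := 2 + (n + μ + 1 + 2 * α) * p - (n + μ - 1) * p ^ 2

/-- `p_S(d,α)`: the positive root of `2+(d+1+2α)p−(d−1)p² = 0` (here `d = n+μ`). -/
def pS (d α : ℝ) : ℝ :=
  ((d + 1 + 2 * α) + Real.sqrt ((d + 1 + 2 * α) ^ 2 + 8 * (d - 1))) / (2 * (d - 1))

/-- `μ*(n,α)`. -/
def muStar (n α : ℝ) : ℝ :=
  (2 * n ^ 2 + (n + 2 + α) * (n * α + 2 + α)) / ((n + 2 + α) * (2 + α))

/-- The modified Bessel function of the second kind,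
`K_ν(t) = ∫_0^∞ e^{−t cosh s} cosh(νs) ds`. -/
def besselK (ν t : ℝ) : ℝ :=
  ∫ s in Set.Ioi (0 : ℝ), Real.exp (-t * Real.cosh s) * Real.cosh (ν * s)

/-- `h(t) = t^{(μ+1)/2} K_{(μ−1)/2}(t)`. -/
def hEPD (μ t : ℝ) : ℝ := t ^ ((μ + 1) / 2) * besselK ((μ - 1) / 2) t

/-- The surface measure `σ` on the unit sphere `S^{n-1} ⊂ ℝⁿ`. -/
def sphMeasure (n : ℕ) : Measure (Metric.sphere (0 : EuclideanSpace ℝ (Fin n)) 1) :=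
  (volume : Measure (EuclideanSpace ℝ (Fin n))).toSphere

/-- `φ(x) = ∫_{S^{n-1}} e^{x·ω} dσ(ω)`. -/
def phi (n : ℕ) (x : EuclideanSpace ℝ (Fin n)) : ℝ :=
  ∫ ω, Real.exp ⟪x, (ω : EuclideanSpace ℝ (Fin n))⟫ ∂(sphMeasure n)

/-- `b_q(t,x) = ∫_0^1 h(λt) φ(λx) λ^{q−1} dλ`. -/
def bq (n : ℕ) (μ q : ℝ) (t : ℝ) (x : EuclideanSpace ℝ (Fin n)) : ℝ :=
  ∫ lam in Set.Ioc (0 : ℝ) 1, hEPD μ (lam * t) * phi n (lam • x) * lam ^ (q - 1)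


/-! ### The exponents -/

/-- `1 / p_S(d,α)` is the positive root of the reversed quadratic `2r² + (d+1+2α)r - (d-1)`. -/
lemma one_div_pS {d α : ℝ} (hd : 1 < d) (hα : 0 ≤ α) :
    0 < 1 / pS d α ∧
      2 * (1 / pS d α) ^ 2 + (d + 1 + 2 * α) * (1 / pS d α) - (d - 1) = 0 := by
  have hd' : 0 < d - 1 := by linarith
  set B := d + 1 + 2 * α with hB
  have hBpos : 0 < B := by linarith
  have hdisc : 0 ≤ B ^ 2 + 8 * (d - 1) := by positivity
  set S := Real.sqrt (B ^ 2 + 8 * (d - 1)) with hS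
  have hSS : S ^ 2 = B ^ 2 + 8 * (d - 1) := Real.sq_sqrt hdisc
  have hS0 : 0 ≤ S := Real.sqrt_nonneg _
  have hval : 1 / pS d α = 2 * (d - 1) / (B + S) := by
    rw [pS, one_div, inv_div]
  rw [hval]
  have : 0 < B + S := by linarith
  refine ⟨by positivity, ?_⟩
  field_simp
  linear_combination -(d - 1) * hSS

/-- The conditions on the exponents used below: `1/p < 1` makes `λ^{-1/p}` integrable at `0`, and
`q + 1`, `q + μ`, `q + μ/2` control the singularities at `λ = 0` that come from `h` and its
Lipschitz constant. The cases `n ≥ 3` and `n = 2`, `α > 0` are distinguished for `q + μ/2`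
only. -/
lemma exponent_facts (n : ℕ) (α μ p q : ℝ)
    (hnα : (3 ≤ n ∧ 0 ≤ α) ∨ (n = 2 ∧ 0 < α))
    (hμ0 : 0 < μ) (hμ : μ < muStar n α)
    (hp : p = pS ((n : ℝ) + μ) α)
    (hq : q = ((n : ℝ) - μ - 1) / 2 - 1 / p) :
    1 / p < 1 ∧ 0 < q + 1 ∧ 0 < q + μ ∧ 0 < q + μ / 2 := by
  have hn2 : (2 : ℝ) ≤ n := by
    rcases hnα with h | h
    · have : (3 : ℝ) ≤ n := by exact_mod_cast h.1
      linarith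
    · rw [h.1]; norm_num
  have hα : 0 ≤ α := by rcases hnα with h | h <;> linarith [h.2]
  obtain ⟨hr0, hr⟩ := one_div_pS (d := n + μ) (α := α) (by linarith) hα
  rw [← hp] at hr0 hr
  set r := 1 / p with hrdef
  have hN : 0 < (n : ℝ) + 2 + α := by linarith
  rw [muStar, lt_div_iff₀ (by positivity)] at hμ
  -- at `r = n / (n + 2 + α)` the quadratic is positive
  have hrN : r * (n + 2 + α) < n := by
    by_contra! hcon
    have h1 : ((n:ℝ)) ^ 2 ≤ (r * (n + 2 + α)) ^ 2 := by
      apply pow_le_pow_left₀ <;> linarith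
    have h2 : (n : ℝ) * ((n + μ + 1 + 2 * α) * (n + 2 + α)) ≤
        (r * (n + 2 + α)) * ((n + μ + 1 + 2 * α) * (n + 2 + α)) :=
      mul_le_mul_of_nonneg_right hcon (by positivity)
    have h3 : 2 * (r * (n + 2 + α)) ^ 2
        + (r * (n + 2 + α)) * ((n + μ + 1 + 2 * α) * (n + 2 + α))
        = (n + μ - 1) * (n + 2 + α) ^ 2 := by
      linear_combination (n + 2 + α) ^ 2 * hr
    nlinarith
  have hr1 : r < 1 := by
    by_contra! hcon
    nlinarith
  have hrq : 2 * r < n + 1 - μ := by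
    -- `n + 1 - μ* = 2 n / (n + 2 + α)`
    have h1 : μ * (n + 2 + α) * (2 + α) < ((n + 1) * (n + 2 + α) - 2 * n) * (2 + α) := by
      nlinarith
    have h2 := lt_of_mul_lt_mul_right h1 (by linarith)
    have h3 : 2 * r * (n + 2 + α) < (n + 1 - μ) * (n + 2 + α) := by nlinarith
    exact lt_of_mul_lt_mul_right h3 hN.le
  refine ⟨hr1, by rw [hq]; linarith, ?_, ?_⟩
  · have : r < (n + μ - 1) / 2 := by
      by_contra! hcon
      nlinarith [mul_le_mul hcon hcon (by linarith) hr0.le]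
    rw [hq]; linarith
  · rw [hq]
    rcases hnα with h | h
    · have : (3 : ℝ) ≤ n := by exact_mod_cast h.1
      linarith
    · have h2 : (n : ℝ) = 2 := by rw [h.1]; norm_num
      rw [h2] at hrN ⊢
      nlinarith [h.2]

/-! ### Surface measure and the spherical integral -/

lemma rpow_le_mul_exp {a x : ℝ} (ha : 0 < a) (hx : 0 ≤ x) :
    x ^ a ≤ a ^ a * Real.exp x := by
  have h1 : x / a ≤ Real.exp (x / a) := by linarith [Real.add_one_le_exp (x / a)]
  have h2 : (x / a) ^ a ≤ Real.exp (x / a) ^ a :=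
    Real.rpow_le_rpow (by positivity) h1 ha.le
  rw [← Real.exp_mul, div_mul_cancel₀ _ ha.ne', Real.div_rpow hx ha.le,
    div_le_iff₀ (by positivity)] at h2
  linarith

lemma lintegral_gaussian_lt_top (n : ℕ) :
    ∫⁻ z : EuclideanSpace ℝ (Fin n), ENNReal.ofReal (Real.exp (-‖z‖ ^ 2 / 2)) < ⊤ := by
  have h := (GaussianFourier.integrable_cexp_neg_mul_sq_norm_add (V := EuclideanSpace ℝ (Fin n)) (b := 1 / 2)
    (by norm_num) 0 0).norm
  have h' : Integrable (fun z : EuclideanSpace ℝ (Fin n) => Real.exp (-‖z‖ ^ 2 / 2)) := by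
    refine h.congr (Filter.Eventually.of_forall fun z => ?_)
    simp only [Complex.norm_exp]
    congr 1
    norm_num [← Complex.ofReal_pow]
    ring
  have h2 := h'.2
  rw [hasFiniteIntegral_iff_ofReal (Filter.Eventually.of_forall fun z => (Real.exp_pos _).le)] at h2
  exact h2

/-- Integration in polar coordinates with respect to the surface measure `sphMeasure n`. -/
lemma lintegral_polar (n : ℕ) (f : (EuclideanSpace ℝ (Fin n)) → ENNReal) (hf : Measurable f) (hn : 1 ≤ n) :
    ∫⁻ z, f z = ∫⁻ ω, ∫⁻ r in Set.Ioi (0 : ℝ), ENNReal.ofReal (r ^ (n - 1)) *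
      f (r • (ω : EuclideanSpace ℝ (Fin n))) ∂(volume) ∂(sphMeasure n) := by
  have : Nonempty (Fin n) := ⟨⟨0, hn⟩⟩
  have hmp := (volume : Measure (EuclideanSpace ℝ (Fin n))).measurePreserving_homeomorphUnitSphereProd
  have hg : Measurable fun y : Metric.sphere (0 : EuclideanSpace ℝ (Fin n)) 1 × Set.Ioi (0 : ℝ) =>
      f ((y.2 : ℝ) • (y.1 : EuclideanSpace ℝ (Fin n))) :=
    hf.comp ((measurable_subtype_coe.comp measurable_snd).smul
      (measurable_subtype_coe.comp measurable_fst))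
  calc ∫⁻ z, f z = ∫⁻ z in ({0}ᶜ : Set (EuclideanSpace ℝ (Fin n))), f z := by
        rw [restrict_compl_singleton]
    _ = ∫⁻ z : ({0}ᶜ : Set (EuclideanSpace ℝ (Fin n))), f z ∂((volume : Measure (EuclideanSpace ℝ (Fin n))).comap (↑)) := by
        rw [lintegral_subtype_comap (measurableSet_singleton _).compl]
    _ = ∫⁻ y : Metric.sphere (0 : EuclideanSpace ℝ (Fin n)) 1 × Set.Ioi (0 : ℝ), f ((y.2 : ℝ) • (y.1 : EuclideanSpace ℝ (Fin n))) ∂(volume.toSphere.prod (.volumeIoiPow (n - 1))) := by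
        have := hmp.lintegral_comp hg
        rw [finrank_euclideanSpace_fin] at this
        rw [← this]
        refine lintegral_congr fun z => ?_
        congr 1
        have hz : ‖(z : EuclideanSpace ℝ (Fin n))‖ ≠ 0 := norm_ne_zero_iff.2 z.2
        simp [smul_smul, hz]
    _ = _ := by
        rw [lintegral_prod _ hg.aemeasurable]
        refine lintegral_congr fun ω => ?_
        rw [Measure.volumeIoiPow, lintegral_withDensity_eq_lintegral_mul _ (by fun_prop) 
          (by fun_prop)]
        exact lintegral_subtype_comap measurableSet_Ioi
          (fun r : ℝ => ENNReal.ofReal (r ^ (n - 1)) * f (r • (ω : EuclideanSpace ℝ (Fin n))))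

lemma phi_continuous (n : ℕ) : Continuous (phi n) := by
  unfold phi sphMeasure
  refine continuous_iff_continuousAt.2 fun x₀ => ?_
  refine continuousAt_of_dominated (bound := fun _ => Real.exp (‖x₀‖ + 1)) ?_ ?_ ?_ ?_
  · refine Filter.Eventually.of_forall fun x => ?_
    exact (by fun_prop : Continuous fun ω : Metric.sphere (0 : EuclideanSpace ℝ (Fin n)) 1 =>
      Real.exp ⟪x, (ω : EuclideanSpace ℝ (Fin n))⟫).aestronglyMeasurable
  · filter_upwards [Metric.ball_mem_nhds x₀ one_pos] with x hx
    refine Filter.Eventually.of_forall fun ω => ?_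
    rw [Real.norm_eq_abs, Real.abs_exp]
    refine Real.exp_le_exp.2 ((real_inner_le_norm _ _).trans ?_)
    rw [norm_eq_of_mem_sphere, mul_one]
    rw [mem_ball_iff_norm] at hx
    linarith [norm_le_norm_add_norm_sub' x x₀]
  · exact integrable_const _
  · exact Filter.Eventually.of_forall fun ω => by fun_prop

lemma phi_integrable (n : ℕ) (x : EuclideanSpace ℝ (Fin n)) : Integrable
    (fun ω : Metric.sphere (0 : EuclideanSpace ℝ (Fin n)) 1 => Real.exp ⟪x, (ω : EuclideanSpace ℝ (Fin n))⟫) (sphMeasure n) := by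
  unfold sphMeasure
  refine Integrable.of_bound (C := Real.exp ‖x‖)
    (by fun_prop : Continuous fun ω : Metric.sphere (0 : EuclideanSpace ℝ (Fin n)) 1 =>
      Real.exp ⟪x, (ω : EuclideanSpace ℝ (Fin n))⟫).aestronglyMeasurable (Filter.Eventually.of_forall fun ω => ?_)
  rw [Real.norm_eq_abs, Real.abs_exp]
  refine Real.exp_le_exp.2 ((real_inner_le_norm _ _).trans ?_)
  rw [norm_eq_of_mem_sphere, mul_one]

lemma phi_nonneg (n : ℕ) (x : EuclideanSpace ℝ (Fin n)) : 0 ≤ phi n x :=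
  integral_nonneg fun _ => (Real.exp_pos _).le

lemma phi_le_exp (n : ℕ) (x : EuclideanSpace ℝ (Fin n)) :
    phi n x ≤ (sphMeasure n).real Set.univ * Real.exp ‖x‖ := by
  have : IsFiniteMeasure (sphMeasure n) := by unfold sphMeasure; infer_instance
  have h : phi n x ≤ ∫ _, Real.exp ‖x‖ ∂(sphMeasure n) := by
    refine integral_mono (phi_integrable n x) (integrable_const _) fun ω => ?_
    refine Real.exp_le_exp.2 ((real_inner_le_norm _ _).trans ?_)
    rw [norm_eq_of_mem_sphere, mul_one]
  simpa using h

/-- On the ray through the unit vector `ω`, at distance `r ∈ (R, R + 1]` from the origin, the Gaussian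
centred at `R x/‖x‖` dominates `e^{x·ω - ‖x‖}` up to a constant: its exponent is
`-(r-R)²/2 - (rR/‖x‖)(‖x‖ - x·ω)`, and `rR ≤ ‖x‖`. -/
lemma gaussian_lower {n : ℕ} {x ω : EuclideanSpace ℝ (Fin n)} {R r : ℝ} (hω : ‖ω‖ = 1) (hx : 0 < ‖x‖)
    (hR : 0 < R) (hr : R < r) (hr' : r ≤ R + 1) (hRx : R * (R + 1) ≤ ‖x‖) :
    Real.exp (-1 / 2) * Real.exp (-‖x‖) * Real.exp ⟪x, ω⟫ ≤
      Real.exp (-‖r • ω - (R / ‖x‖) • x‖ ^ 2 / 2) := by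
  rw [← Real.exp_add, ← Real.exp_add, Real.exp_le_exp]
  have hle : ⟪x, ω⟫ ≤ ‖x‖ := by simpa [hω] using real_inner_le_norm x ω
  have h1 : ‖r • ω - (R / ‖x‖) • x‖ ^ 2 = (r - R) ^ 2 + 2 * (r * R / ‖x‖) * (‖x‖ - ⟪x, ω⟫) := by
    rw [norm_sub_sq_real, norm_smul, norm_smul, hω, inner_smul_left, inner_smul_right,
      real_inner_comm]
    simp only [Real.norm_eq_abs, mul_pow, sq_abs, conj_trivial]
    field_simp
    ring
  have h2 : r * R / ‖x‖ ≤ 1 := by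
    rw [div_le_one hx]; nlinarith
  have h3 : (r * R / ‖x‖) * (‖x‖ - ⟪x, ω⟫) ≤ 1 * (‖x‖ - ⟪x, ω⟫) :=
    mul_le_mul_of_nonneg_right h2 (by linarith)
  rw [h1]
  nlinarith

/-- Comparison of `φ(x)` with the total mass of a Gaussian centred at distance `R` from the origin,
where `R (R + 1) ≤ ‖x‖`: only the shell `R < r ≤ R + 1` is kept in polar coordinates. -/
lemma phi_core {n : ℕ} (hn : 1 ≤ n) {x : EuclideanSpace ℝ (Fin n)} {R : ℝ} (hx : 0 < ‖x‖) (hR : 0 < R)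
    (hRx : R * (R + 1) ≤ ‖x‖) :
    R ^ (n - 1) * (Real.exp (-1 / 2) * Real.exp (-‖x‖) * phi n x) ≤
      (∫⁻ z : EuclideanSpace ℝ (Fin n), ENNReal.ofReal (Real.exp (-‖z‖ ^ 2 / 2))).toReal := by
  set c := Real.exp (-1 / 2) * Real.exp (-‖x‖) with hc
  have hc0 : 0 < c := by positivity
  rw [← ENNReal.ofReal_le_iff_le_toReal (lintegral_gaussian_lt_top n).ne]
  have hphi : R ^ (n - 1) * (c * phi n x) =
      ∫ ω, R ^ (n - 1) * (c * Real.exp ⟪x, (ω : EuclideanSpace ℝ (Fin n))⟫) ∂(sphMeasure n) := by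
    rw [integral_const_mul, integral_const_mul]; rfl
  rw [hphi, ofReal_integral_eq_lintegral_ofReal
    (((phi_integrable n x).const_mul c).const_mul _)
    (Filter.Eventually.of_forall fun ω => by positivity)]
  rw [← lintegral_sub_right_eq_self _ ((R / ‖x‖) • x), lintegral_polar n _ (by fun_prop) hn]
  refine lintegral_mono fun ω => ?_
  calc ENNReal.ofReal (R ^ (n - 1) * (c * Real.exp ⟪x, (ω : EuclideanSpace ℝ (Fin n))⟫))
      = ∫⁻ _ in Set.Ioc R (R + 1),
          ENNReal.ofReal (R ^ (n - 1) * (c * Real.exp ⟪x, (ω : EuclideanSpace ℝ (Fin n))⟫)) := by simp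
    _ ≤ ∫⁻ r in Set.Ioc R (R + 1), ENNReal.ofReal (r ^ (n - 1)) *
          ENNReal.ofReal (Real.exp (-‖r • (ω : EuclideanSpace ℝ (Fin n)) - (R / ‖x‖) • x‖ ^ 2 / 2)) := by
        refine setLIntegral_mono' measurableSet_Ioc fun r hr => ?_
        have hr0 : 0 < r := hR.trans hr.1
        rw [← ENNReal.ofReal_mul (by positivity)]
        refine ENNReal.ofReal_le_ofReal ?_
        exact mul_le_mul (pow_le_pow_left₀ hR.le hr.1.le _)
          (gaussian_lower (norm_eq_of_mem_sphere ω) hx hR hr.1 hr.2 hRx)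
          (by positivity) (by positivity)
    _ ≤ _ := lintegral_mono_set fun r hr => hR.trans hr.1

/-- `φ(x) ≲ (1 + ‖x‖)^{-(n-1)/2} e^{‖x‖}`: the trivial bound for `‖x‖ ≤ 1`, and `phi_core` with
`R = √‖x‖ / 2` otherwise. -/
lemma phi_bound {n : ℕ} (hn : 1 ≤ n) : ∃ C > (0 : ℝ), ∀ x : EuclideanSpace ℝ (Fin n),
    phi n x ≤ C * ((1 + ‖x‖) ^ (-(((n : ℝ) - 1) / 2)) * Real.exp ‖x‖) := by
  set m : ℝ := ((n : ℝ) - 1) / 2 with hm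
  have hm0 : 0 ≤ m := by
    have : (1 : ℝ) ≤ n := by exact_mod_cast hn
    rw [hm]; linarith
  set G := (∫⁻ z : EuclideanSpace ℝ (Fin n), ENNReal.ofReal (Real.exp (-‖z‖ ^ 2 / 2))).toReal with hG
  set S := (sphMeasure n).real Set.univ with hS
  have hG0 : 0 ≤ G := ENNReal.toReal_nonneg
  have hS0 : 0 ≤ S := measureReal_nonneg
  refine ⟨2 ^ m * S + 8 ^ m * G * Real.exp (1 / 2) + 1, by positivity, fun x => ?_⟩
  -- it suffices to bound `(1 + ‖x‖) ^ m * phi n x`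
  have key : (1 + ‖x‖) ^ m * phi n x ≤
      (2 ^ m * S + 8 ^ m * G * Real.exp (1 / 2) + 1) * Real.exp ‖x‖ := by
    have hE := Real.exp_pos ‖x‖
    rcases le_total ‖x‖ 1 with h1 | h1
    · have h2 : (1 + ‖x‖) ^ m ≤ 2 ^ m :=
        Real.rpow_le_rpow (by positivity) (by linarith) hm0
      calc (1 + ‖x‖) ^ m * phi n x ≤ 2 ^ m * (S * Real.exp ‖x‖) :=
            mul_le_mul h2 (phi_le_exp n x) (phi_nonneg n x) (by positivity)
        _ = (2 ^ m * S) * Real.exp ‖x‖ := by ring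
        _ ≤ _ := by
          gcongr
          have : 0 ≤ 8 ^ m * G * Real.exp (1 / 2) := by positivity
          linarith
    · set R := Real.sqrt ‖x‖ / 2 with hR
      have hx : 0 < ‖x‖ := by linarith
      have hs := Real.sq_sqrt hx.le
      have hs1 : 1 ≤ Real.sqrt ‖x‖ := Real.one_le_sqrt.2 h1
      have hR0 : 0 < R := by rw [hR]; linarith
      have hcore := phi_core hn hx hR0 (by rw [hR]; nlinarith)
      rw [← hG] at hcore
      have h2 : (1 + ‖x‖) ^ m ≤ 8 ^ m * R ^ (n - 1) := by
        have h3 : R ^ (n - 1) = (R ^ 2) ^ m := by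
          rw [← Real.rpow_natCast R 2, ← Real.rpow_mul hR0.le, ← Real.rpow_natCast,
            Nat.cast_sub hn, hm]
          congr 1
          push_cast; ring
        rw [h3, ← Real.mul_rpow (by norm_num) (by positivity)]
        refine Real.rpow_le_rpow (by positivity) ?_ hm0
        rw [hR]; nlinarith
      have h4 : phi n x = Real.exp (1 / 2) * Real.exp ‖x‖ *
          (Real.exp (-1 / 2) * Real.exp (-‖x‖) * phi n x) := by
        have : Real.exp (1 / 2) * Real.exp (-1 / 2) = 1 := by
          rw [← Real.exp_add]; norm_num
        have h' : Real.exp ‖x‖ * Real.exp (-‖x‖) = 1 := by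
          rw [← Real.exp_add]; norm_num
        linear_combination (-(Real.exp ‖x‖ * Real.exp (-‖x‖)) * phi n x) * this
          - phi n x * h'
      calc (1 + ‖x‖) ^ m * phi n x ≤ 8 ^ m * R ^ (n - 1) * phi n x :=
            mul_le_mul_of_nonneg_right h2 (phi_nonneg n x)
        _ = 8 ^ m * Real.exp (1 / 2) * Real.exp ‖x‖ *
            (R ^ (n - 1) * (Real.exp (-1 / 2) * Real.exp (-‖x‖) * phi n x)) := by
            conv_lhs => rw [h4]
            ring
        _ ≤ 8 ^ m * Real.exp (1 / 2) * Real.exp ‖x‖ * G := by gcongr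
        _ = (8 ^ m * G * Real.exp (1 / 2)) * Real.exp ‖x‖ := by ring
        _ ≤ _ := by
          gcongr
          have : 0 ≤ 2 ^ m * S := by positivity
          linarith
  have hpos : 0 < (1 + ‖x‖) ^ m := by positivity
  rw [Real.rpow_neg (by positivity), ← mul_le_mul_iff_right₀ hpos]
  refine key.trans (le_of_eq ?_)
  field_simp

/-! ### The modified Bessel function -/

lemma half_sq_le_cosh_sub_one (u : ℝ) : u ^ 2 / 2 ≤ Real.cosh u - 1 := by
  have h1 : Real.cosh u = 1 + 2 * Real.sinh (u / 2) ^ 2 := by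
    have h := Real.cosh_two_mul (u / 2)
    rw [mul_div_cancel₀ u two_ne_zero] at h
    linarith [Real.cosh_sq (u / 2)]
  have h2 : (u / 2) ^ 2 ≤ Real.sinh (u / 2) ^ 2 := by
    rw [sq_le_sq, Real.abs_sinh]
    exact Real.self_le_sinh_iff.2 (abs_nonneg _)
  nlinarith

lemma exp_div_eight_le_cosh_sub_one {u : ℝ} (hu : 1 ≤ u) :
    Real.exp u / 8 ≤ Real.cosh u - 1 := by
  have h1 : (2.7 : ℝ) ≤ Real.exp u :=
    (by linarith [Real.exp_one_gt_d9] : (2.7 : ℝ) ≤ Real.exp 1).trans (Real.exp_le_exp.2 hu)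
  rw [Real.cosh_eq]
  linarith [Real.exp_pos (-u)]

/-- A majorant for `e^{bu} e^{-s cosh u}` on `u > 0`, when `0 ≤ b < a`, with explicit integral: the
Gaussian term covers `u ≤ 1`, where `cosh u - 1 ≥ u²/2`, and the exponential term covers `u ≥ 1`,
where `cosh u - 1 ≥ e^u/8`. -/
def besselMaj (a b s u : ℝ) : ℝ :=
  Real.exp (-s) * (Real.exp b * Real.exp (-(s / 2) * u ^ 2) +
    a ^ a * 8 ^ a * s ^ (-a) * Real.exp (-(a - b) * u))

lemma exp_cosh_le_besselMaj {a b s u : ℝ} (hb : 0 ≤ b) (ha : b < a) (hs : 0 < s) :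
    Real.exp (b * u) * Real.exp (-s * Real.cosh u) ≤ besselMaj a b s u := by
  have ha0 : 0 < a := hb.trans_lt ha
  have h0 : Real.exp (-s * Real.cosh u) =
      Real.exp (-s) * Real.exp (-(s * (Real.cosh u - 1))) := by
    rw [← Real.exp_add]; ring_nf
  rw [h0, besselMaj, mul_left_comm]
  refine mul_le_mul_of_nonneg_left ?_ (Real.exp_pos _).le
  rcases le_total u 1 with h1 | h1
  · have h2 : Real.exp (b * u) ≤ Real.exp b := Real.exp_le_exp.2 (by nlinarith)
    have h3 : Real.exp (-(s * (Real.cosh u - 1))) ≤ Real.exp (-(s / 2) * u ^ 2) :=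
      Real.exp_le_exp.2 (by nlinarith [half_sq_le_cosh_sub_one u])
    have h4 := mul_le_mul h2 h3 (Real.exp_pos _).le (Real.exp_pos _).le
    have : 0 ≤ a ^ a * 8 ^ a * s ^ (-a) * Real.exp (-(a - b) * u) := by positivity
    linarith
  · have h2 := exp_div_eight_le_cosh_sub_one h1
    have h3 : Real.exp (-(s * (Real.cosh u - 1))) ≤ Real.exp (-(s * (Real.exp u / 8))) :=
      Real.exp_le_exp.2 (by nlinarith)
    have h4 := rpow_le_mul_exp ha0 (x := s * (Real.exp u / 8)) (by positivity)
    have h5 : (s * (Real.exp u / 8)) ^ a = s ^ a * Real.exp (a * u) / 8 ^ a := by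
      rw [Real.mul_rpow hs.le (by positivity), Real.div_rpow (Real.exp_pos _).le (by norm_num),
        ← Real.exp_mul, mul_comm u a]
      ring
    have h6 : Real.exp (-(s * (Real.exp u / 8))) ≤
        a ^ a * 8 ^ a * s ^ (-a) * Real.exp (-(a * u)) := by
      rw [h5] at h4
      rw [Real.exp_neg, Real.rpow_neg hs.le, Real.exp_neg]
      have := Real.exp_pos (s * (Real.exp u / 8))
      rw [inv_le_iff_one_le_mul₀ this]
      rw [div_le_iff₀ (by positivity)] at h4
      calc (1 : ℝ) = (s ^ a * Real.exp (a * u)) * ((s ^ a)⁻¹ * (Real.exp (a * u))⁻¹) := by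
            field_simp
        _ ≤ (a ^ a * Real.exp (s * (Real.exp u / 8)) * 8 ^ a) *
            ((s ^ a)⁻¹ * (Real.exp (a * u))⁻¹) :=
            mul_le_mul_of_nonneg_right h4 (by positivity)
        _ = _ := by ring
    calc Real.exp (b * u) * Real.exp (-(s * (Real.cosh u - 1)))
        ≤ Real.exp (b * u) * (a ^ a * 8 ^ a * s ^ (-a) * Real.exp (-(a * u))) :=
          mul_le_mul_of_nonneg_left (h3.trans h6) (Real.exp_pos _).le
      _ = a ^ a * 8 ^ a * s ^ (-a) * Real.exp (-(a - b) * u) := by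
          rw [mul_left_comm, ← Real.exp_add]; ring_nf
      _ ≤ _ := by
          have : 0 ≤ Real.exp b * Real.exp (-(s / 2) * u ^ 2) := by positivity
          linarith

lemma besselMaj_integrable {a b s : ℝ} (ha : b < a) (hs : 0 < s) :
    IntegrableOn (besselMaj a b s) (Set.Ioi 0) := by
  refine Integrable.const_mul (Integrable.add ?_ ?_) _
  · exact ((integrable_exp_neg_mul_sq (b := s / 2) (by positivity)).integrableOn).const_mul _
  · exact (exp_neg_integrableOn_Ioi 0 (sub_pos.2 ha)).const_mul _

lemma besselMaj_integral {a b : ℝ} (hb : 0 ≤ b) (ha : b < a) : ∃ C > (0 : ℝ), ∀ s > (0 : ℝ),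
    ∫ u in Set.Ioi 0, besselMaj a b s u ≤
      C * (Real.exp (-s) * (s ^ (-(1 / 2) : ℝ) + s ^ (-a))) := by
  have ha0 : 0 < a := hb.trans_lt ha
  have hab : 0 < a - b := sub_pos.2 ha
  set A := Real.exp b * Real.sqrt (2 * Real.pi) / 2
  set B := a ^ a * 8 ^ a * (1 / (a - b))
  have hA : 0 < A := by positivity
  have hB : 0 < B := by positivity
  refine ⟨A + B, by positivity, fun s hs => ?_⟩
  have hI : ∫ u in Set.Ioi 0, besselMaj a b s u =
      Real.exp (-s) * (A * s ^ (-(1 / 2) : ℝ) + B * s ^ (-a)) := by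
    simp only [besselMaj]
    rw [integral_const_mul, integral_add, integral_const_mul, integral_const_mul,
      integral_gaussian_Ioi, integral_exp_mul_Ioi (by linarith)]
    · have hsqrt : s ^ (-(1 / 2) : ℝ) = (Real.sqrt s)⁻¹ := by
        rw [Real.rpow_neg hs.le, Real.sqrt_eq_rpow]
      rw [hsqrt]
      have : Real.pi / (s / 2) = 2 * Real.pi / s := by field_simp
      rw [this, Real.sqrt_div (by positivity)]
      simp only [A, B, mul_zero, Real.exp_zero]
      rw [neg_div_neg_eq]
      ring
    · exact ((integrable_exp_neg_mul_sq (b := s / 2) (by positivity)).integrableOn).const_mul _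
    · exact (exp_neg_integrableOn_Ioi 0 (sub_pos.2 ha)).const_mul _
  rw [hI]
  have h1 : 0 < s ^ (-(1 / 2) : ℝ) := by positivity
  have h2 : 0 < s ^ (-a) := by positivity
  rw [mul_left_comm]
  refine mul_le_mul_of_nonneg_left ?_ (Real.exp_pos _).le
  nlinarith [mul_pos hA h2, mul_pos hB h1]

lemma cosh_le_exp_abs (x : ℝ) : Real.cosh x ≤ Real.exp |x| := by
  rw [← Real.cosh_abs, Real.cosh_eq]
  have : Real.exp (-|x|) ≤ Real.exp |x| := Real.exp_le_exp.2 (by linarith [abs_nonneg x])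
  linarith

lemma besselK_integrand_le {a ν s u : ℝ} (ha : |ν| < a) (hs : 0 < s) (hu : 0 < u) :
    Real.exp (-s * Real.cosh u) * Real.cosh (ν * u) ≤ besselMaj a |ν| s u := by
  refine le_trans ?_ (exp_cosh_le_besselMaj (abs_nonneg ν) ha hs)
  rw [mul_comm]
  refine mul_le_mul_of_nonneg_right ((cosh_le_exp_abs _).trans_eq ?_) (Real.exp_pos _).le
  rw [abs_mul, abs_of_pos hu]

lemma besselK_integrable (ν : ℝ) {s : ℝ} (hs : 0 < s) : IntegrableOn
    (fun u => Real.exp (-s * Real.cosh u) * Real.cosh (ν * u)) (Set.Ioi 0) := by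
  refine Integrable.mono' (besselMaj_integrable (lt_add_one |ν|) hs)
    (by fun_prop) ?_
  refine (ae_restrict_iff' measurableSet_Ioi).2 (Filter.Eventually.of_forall fun u hu => ?_)
  rw [Real.norm_eq_abs, abs_of_nonneg
    (mul_nonneg (Real.exp_pos _).le (Real.cosh_pos _).le)]
  exact besselK_integrand_le (lt_add_one _) hs hu

lemma besselK_nonneg (ν s : ℝ) : 0 ≤ besselK ν s :=
  integral_nonneg fun _ => mul_nonneg (Real.exp_pos _).le (Real.cosh_pos _).le

/-- `K_ν(s) ≲ e^{-s} (s^{-1/2} + s^{-a})` for `a > |ν|`: decay at infinity and singularity at `0` in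
one bound. -/
lemma besselK_bound {ν a : ℝ} (ha : |ν| < a) : ∃ C > (0 : ℝ), ∀ s > (0 : ℝ),
    besselK ν s ≤ C * (Real.exp (-s) * (s ^ (-(1 / 2) : ℝ) + s ^ (-a))) := by
  obtain ⟨C, hC, h⟩ := besselMaj_integral (abs_nonneg ν) ha
  refine ⟨C, hC, fun s hs => le_trans ?_ (h s hs)⟩
  exact setIntegral_mono_on (besselK_integrable ν hs) (besselMaj_integrable ha hs)
    measurableSet_Ioi fun u hu => besselK_integrand_le ha hs hu

/-- Lipschitz bound for `s ↦ e^{-sc}` on `[m, ∞)`. -/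
lemma abs_exp_neg_mul_sub_le {s₁ s₂ m c : ℝ} (hc : 0 ≤ c) (h1 : m ≤ s₁) (h2 : m ≤ s₂) :
    |Real.exp (-s₁ * c) - Real.exp (-s₂ * c)| ≤ |s₁ - s₂| * (c * Real.exp (-m * c)) := by
  wlog h : s₁ ≤ s₂ generalizing s₁ s₂
  · rw [abs_sub_comm, abs_sub_comm s₁]
    exact this h2 h1 (le_of_not_ge h)
  rw [abs_of_nonneg (sub_nonneg.2 (Real.exp_le_exp.2 (by nlinarith))), abs_sub_comm,
    abs_of_nonneg (sub_nonneg.2 h)]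
  have h3 : Real.exp (-s₂ * c) = Real.exp (-s₁ * c) * Real.exp (-(s₂ - s₁) * c) := by
    rw [← Real.exp_add]; ring_nf
  have h4 := Real.add_one_le_exp (-(s₂ - s₁) * c)
  have h5 : Real.exp (-s₁ * c) ≤ Real.exp (-m * c) := Real.exp_le_exp.2 (by nlinarith)
  have h6 : 0 ≤ (s₂ - s₁) * c := mul_nonneg (sub_nonneg.2 h) hc
  calc Real.exp (-s₁ * c) - Real.exp (-s₂ * c)
      = Real.exp (-s₁ * c) * (1 - Real.exp (-(s₂ - s₁) * c)) := by rw [h3]; ring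
    _ ≤ Real.exp (-s₁ * c) * ((s₂ - s₁) * c) :=
        mul_le_mul_of_nonneg_left (by linarith) (Real.exp_pos _).le
    _ ≤ Real.exp (-m * c) * ((s₂ - s₁) * c) := mul_le_mul_of_nonneg_right h5 h6
    _ = _ := by ring

/-- Lipschitz bound for `K_ν` on `[m, ∞)`. Differences in `s` cost a factor `cosh u` in the integrand,
which raises the exponent of the singularity from `a` to `a + 1`. -/
lemma besselK_lipschitz {ν a : ℝ} (ha : |ν| < a) : ∃ C > (0 : ℝ), ∀ m > (0 : ℝ), ∀ s₁ ≥ m,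
    ∀ s₂ ≥ m, |besselK ν s₁ - besselK ν s₂| ≤
      |s₁ - s₂| * (C * (Real.exp (-m) * (m ^ (-(1 / 2) : ℝ) + m ^ (-(a + 1))))) := by
  have hb : 0 ≤ |ν| + 1 := by positivity
  have hab : |ν| + 1 < a + 1 := by linarith
  obtain ⟨C, hC, h⟩ := besselMaj_integral hb hab
  refine ⟨C, hC, fun m hm s₁ h1 s₂ h2 => ?_⟩
  refine le_trans ?_ (mul_le_mul_of_nonneg_left (h m hm) (abs_nonneg _))
  rw [besselK, besselK, ← integral_sub (besselK_integrable ν (hm.trans_le h1))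
    (besselK_integrable ν (hm.trans_le h2)), ← integral_const_mul, ← Real.norm_eq_abs]
  refine norm_integral_le_of_norm_le ((besselMaj_integrable hab hm).const_mul _) ?_
  refine (ae_restrict_iff' measurableSet_Ioi).2 (Filter.Eventually.of_forall fun u hu => ?_)
  have hu : 0 < u := hu
  rw [← sub_mul, Real.norm_eq_abs, abs_mul, abs_of_pos (Real.cosh_pos _)]
  have hc := Real.cosh_pos u
  calc _ ≤ |s₁ - s₂| * (Real.cosh u * Real.exp (-m * Real.cosh u)) * Real.cosh (ν * u) :=
        mul_le_mul_of_nonneg_right (abs_exp_neg_mul_sub_le hc.le h1 h2) (Real.cosh_pos _).le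
    _ = |s₁ - s₂| * ((Real.cosh u * Real.cosh (ν * u)) * Real.exp (-m * Real.cosh u)) := by ring
    _ ≤ |s₁ - s₂| * (Real.exp ((|ν| + 1) * u) * Real.exp (-m * Real.cosh u)) := by
        gcongr
        have h3 := mul_le_mul (cosh_le_exp_abs u) (cosh_le_exp_abs (ν * u))
          (Real.cosh_pos _).le (Real.exp_pos _).le
        rw [← Real.exp_add, abs_mul, abs_of_pos hu] at h3
        refine h3.trans_eq ?_
        ring_nf
    _ ≤ _ := by
        gcongr
        exact exp_cosh_le_besselMaj hb hab hm

lemma besselK_measurable (ν : ℝ) : Measurable (besselK ν) := by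
  have h : Continuous (Function.uncurry fun t s : ℝ =>
      Real.exp (-t * Real.cosh s) * Real.cosh (ν * s)) := by
    unfold Function.uncurry; fun_prop
  exact (h.stronglyMeasurable.integral_prod_right
    (ν := volume.restrict (Set.Ioi (0 : ℝ)))).measurable

lemma hEPD_measurable (μ : ℝ) : Measurable (hEPD μ) :=
  (measurable_id.pow_const _).mul (besselK_measurable _)

lemma hEPD_nonneg {μ s : ℝ} (hs : 0 ≤ s) : 0 ≤ hEPD μ s :=
  mul_nonneg (Real.rpow_nonneg hs _) (besselK_nonneg _ _)

lemma hEPD_bound {μ a : ℝ} (ha : |(μ - 1) / 2| < a) : ∃ C > (0 : ℝ), ∀ s > (0 : ℝ),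
    hEPD μ s ≤ C * (s ^ (μ / 2) + s ^ ((μ + 1) / 2 - a)) := by
  obtain ⟨C, hC, h⟩ := besselK_bound ha
  refine ⟨C, hC, fun s hs => ?_⟩
  have h0 : 0 < s ^ ((μ + 1) / 2) := by positivity
  have h1 : Real.exp (-s) ≤ 1 := Real.exp_le_one_iff.2 (by linarith)
  have h2 : 0 < s ^ (-(1 / 2) : ℝ) + s ^ (-a) := by positivity
  have e1 : s ^ (μ / 2) = s ^ ((μ + 1) / 2) * s ^ (-(1 / 2) : ℝ) := by
    rw [← Real.rpow_add hs]; ring_nf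
  have e2 : s ^ ((μ + 1) / 2 - a) = s ^ ((μ + 1) / 2) * s ^ (-a) := by
    rw [← Real.rpow_add hs]; ring_nf
  rw [e1, e2, hEPD]
  calc s ^ ((μ + 1) / 2) * besselK ((μ - 1) / 2) s
      ≤ s ^ ((μ + 1) / 2) * (C * (1 * (s ^ (-(1 / 2) : ℝ) + s ^ (-a)))) := by
        refine mul_le_mul_of_nonneg_left ((h s hs).trans ?_) h0.le
        gcongr
    _ = _ := by ring

/-! ### Local Lipschitz bound for `h` -/

/-- Lipschitz bound for `s ↦ s^w` around `s₀`, with the scale-invariant constant `C s₀^{w-1}`; by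
homogeneity it reduces to `s₀ = 1`. -/
lemma rpow_sub_rpow_le (w : ℝ) : ∃ C > (0 : ℝ), ∀ s₀ > (0 : ℝ), ∀ s, s₀ / 2 ≤ s → s ≤ 2 * s₀ →
    |s ^ w - s₀ ^ w| ≤ |s - s₀| * (C * s₀ ^ (w - 1)) := by
  set M := |w| * 2 ^ |w - 1| + 1 with hM
  have key : ∀ y ∈ Set.Icc (1 / 2 : ℝ) 2, |y ^ w - 1| ≤ M * |y - 1| := by
    intro y hy
    have hd : ∀ z ∈ Set.Icc (1 / 2 : ℝ) 2, HasDerivWithinAt (fun z : ℝ => z ^ w)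
        (w * z ^ (w - 1)) (Set.Icc (1 / 2 : ℝ) 2) z := fun z hz =>
      (Real.hasDerivAt_rpow_const (Or.inl (by linarith [hz.1]))).hasDerivWithinAt
    have hb : ∀ z ∈ Set.Icc (1 / 2 : ℝ) 2, ‖w * z ^ (w - 1)‖ ≤ M := by
      intro z hz
      have hz0 : 0 < z := by linarith [hz.1]
      rw [Real.norm_eq_abs, abs_mul, abs_of_pos (Real.rpow_pos_of_pos hz0 _)]
      have : z ^ (w - 1) ≤ 2 ^ |w - 1| := by
        rw [Real.rpow_def_of_pos hz0, Real.rpow_def_of_pos two_pos, Real.exp_le_exp]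
        have h1 : |Real.log z| ≤ Real.log 2 := by
          rw [abs_le]
          refine ⟨?_, Real.log_le_log hz0 hz.2⟩
          rw [← Real.log_inv]
          exact Real.log_le_log (by norm_num) (by linarith [hz.1])
        calc Real.log z * (w - 1) ≤ |Real.log z * (w - 1)| := le_abs_self _
          _ = |Real.log z| * |w - 1| := abs_mul _ _
          _ ≤ _ := mul_le_mul_of_nonneg_right h1 (abs_nonneg _)
      have := mul_le_mul_of_nonneg_left this (abs_nonneg w)
      linarith
    have := (convex_Icc (1 / 2 : ℝ) 2).norm_image_sub_le_of_norm_hasDerivWithin_le hd hb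
      (x := 1) (y := y) (by norm_num) hy
    simpa using this
  refine ⟨M, by positivity, fun s₀ h0 s h1 h2 => ?_⟩
  have hy := key (s / s₀) ⟨by rw [le_div_iff₀ h0]; linarith, by rw [div_le_iff₀ h0]; linarith⟩
  have hs : 0 < s := by linarith
  have e1 : s ^ w - s₀ ^ w = s₀ ^ w * ((s / s₀) ^ w - 1) := by
    rw [Real.div_rpow hs.le h0.le]; field_simp
  have e2 : s / s₀ - 1 = (s - s₀) / s₀ := by field_simp
  rw [e2, abs_div, abs_of_pos h0] at hy
  rw [e1, abs_mul, abs_of_pos (Real.rpow_pos_of_pos h0 _), Real.rpow_sub_one h0.ne']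
  calc _ ≤ s₀ ^ w * (M * (|s - s₀| / s₀)) := by gcongr
    _ = _ := by ring

lemma rpow_neg_le {s₀ m b : ℝ} (h0 : 0 < s₀) (hm : s₀ / 2 ≤ m) (hb : 0 ≤ b) :
    m ^ (-b) ≤ 2 ^ b * s₀ ^ (-b) := by
  have h1 := Real.rpow_le_rpow_of_nonpos (by positivity) hm (neg_nonpos.2 hb)
  rw [Real.div_rpow h0.le (by norm_num), Real.rpow_neg (by norm_num : (0:ℝ) ≤ 2)] at h1
  refine h1.trans_eq ?_
  field_simp

/-- Lipschitz bound for `h` around `s₀`. The first two conditions on `s` make powers of `s` and `s₀`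
comparable, the third one makes `e^{-s}` and `e^{-s₀}` comparable. -/
lemma hEPD_lipschitz {μ a : ℝ} (ha : |(μ - 1) / 2| < a) : ∃ C > (0 : ℝ), ∀ s₀ > (0 : ℝ),
    ∀ s, s₀ / 2 ≤ s → s ≤ 2 * s₀ → s₀ - 1 ≤ s →
    |hEPD μ s - hEPD μ s₀| ≤ |s - s₀| * (C * (Real.exp (-s₀) *
      (s₀ ^ (μ / 2 - 1) + s₀ ^ ((μ - 1) / 2 - a) + s₀ ^ (μ / 2)))) := by
  have ha0 : 0 < a := (abs_nonneg _).trans_lt ha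
  obtain ⟨C₁, hC₁, h1⟩ := rpow_sub_rpow_le ((μ + 1) / 2)
  obtain ⟨C₂, hC₂, h2⟩ := besselK_bound ha
  obtain ⟨C₃, hC₃, h3⟩ := besselK_lipschitz ha
  set T : ℝ := 2 ^ (1 / 2 : ℝ) + 2 ^ (a + 1) with hT
  have hT0 : 0 < T := by positivity
  have hT1 : (2 : ℝ) ^ (1 / 2 : ℝ) ≤ T := by
    have : (0 : ℝ) < 2 ^ (a + 1) := by positivity
    linarith
  have hT2 : (2 : ℝ) ^ (a + 1) ≤ T := by
    have : (0 : ℝ) < 2 ^ (1 / 2 : ℝ) := by positivity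
    linarith
  have hT3 : (2 : ℝ) ^ a ≤ T :=
    (Real.rpow_le_rpow_of_exponent_le (by norm_num) (by linarith)).trans hT2
  set D := Real.exp 1 * T with hD
  have hD0 : 0 < D := by positivity
  refine ⟨2 * (C₁ * (C₂ * D)) + 2 * (C₃ * D), by positivity, fun s₀ h0 s hs1 hs2 hs3 => ?_⟩
  have hs : 0 < s := by linarith
  set m := min s s₀ with hm
  have hm1 : s₀ / 2 ≤ m := le_min hs1 (by linarith)
  have hm2 : s₀ - 1 ≤ m := le_min hs3 (by linarith)
  have hm0 : 0 < m := by linarith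
  have hexp : ∀ y, s₀ - 1 ≤ y → Real.exp (-y) ≤ Real.exp 1 * Real.exp (-s₀) := by
    intro y hy
    rw [← Real.exp_add]
    exact Real.exp_le_exp.2 (by linarith)
  have hpow : ∀ y b : ℝ, s₀ / 2 ≤ y → 0 ≤ b → (2 : ℝ) ^ b ≤ T → y ^ (-b) ≤ T * s₀ ^ (-b) := by
    intro y b hy hb hbT
    exact (rpow_neg_le h0 hy hb).trans
      (mul_le_mul_of_nonneg_right hbT (Real.rpow_nonneg h0.le _))
  set P := s₀ ^ (-(1 / 2) : ℝ) with hP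
  set Q := s₀ ^ (-a) with hQ
  set W := s₀ ^ ((μ + 1) / 2 - 1) with hW
  have hP0 : 0 < P := by positivity
  have hQ0 : 0 < Q := by positivity
  have hW0 : 0 < W := by positivity
  have hK : besselK ((μ - 1) / 2) s ≤ C₂ * (D * (Real.exp (-s₀) * (P + Q))) := by
    refine (h2 s hs).trans (mul_le_mul_of_nonneg_left ?_ hC₂.le)
    calc Real.exp (-s) * (s ^ (-(1 / 2) : ℝ) + s ^ (-a))
        ≤ (Real.exp 1 * Real.exp (-s₀)) * (T * P + T * Q) := by
          refine mul_le_mul (hexp s hs3) (add_le_add ?_ ?_) (by positivity) (by positivity)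
          · exact hpow s _ hs1 (by norm_num) hT1
          · exact hpow s _ hs1 ha0.le hT3
      _ = _ := by ring
  have hdK : |besselK ((μ - 1) / 2) s - besselK ((μ - 1) / 2) s₀| ≤
      |s - s₀| * (C₃ * (D * (Real.exp (-s₀) * (P + s₀ ^ (-(a + 1)))))) := by
    refine (h3 m hm0 s (min_le_left _ _) s₀ (min_le_right _ _)).trans ?_
    refine mul_le_mul_of_nonneg_left (mul_le_mul_of_nonneg_left ?_ hC₃.le) (abs_nonneg _)
    calc Real.exp (-m) * (m ^ (-(1 / 2) : ℝ) + m ^ (-(a + 1)))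
        ≤ (Real.exp 1 * Real.exp (-s₀)) * (T * P + T * s₀ ^ (-(a + 1))) := by
          refine mul_le_mul (hexp m hm2) (add_le_add ?_ ?_) (by positivity) (by positivity)
          · exact hpow m _ hm1 (by norm_num) hT1
          · exact hpow m _ hm1 (by linarith) hT2
      _ = _ := by ring
  have hw0 : 0 < s₀ ^ ((μ + 1) / 2) := by positivity
  have e1 : W * P = s₀ ^ (μ / 2 - 1) := by
    rw [hW, hP, ← Real.rpow_add h0]; ring_nf
  have e2 : W * Q = s₀ ^ ((μ - 1) / 2 - a) := by
    rw [hW, hQ, ← Real.rpow_add h0]; ring_nf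
  have e3 : s₀ ^ ((μ + 1) / 2) * P = s₀ ^ (μ / 2) := by
    rw [hP, ← Real.rpow_add h0]; ring_nf
  have e4 : s₀ ^ ((μ + 1) / 2) * s₀ ^ (-(a + 1)) = s₀ ^ ((μ - 1) / 2 - a) := by
    rw [← Real.rpow_add h0]; ring_nf
  have hsplit : hEPD μ s - hEPD μ s₀ =
      (s ^ ((μ + 1) / 2) - s₀ ^ ((μ + 1) / 2)) * besselK ((μ - 1) / 2) s +
      s₀ ^ ((μ + 1) / 2) * (besselK ((μ - 1) / 2) s - besselK ((μ - 1) / 2) s₀) := by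
    simp only [hEPD]; ring
  rw [hsplit]
  refine (abs_add_le _ _).trans ?_
  rw [abs_mul, abs_mul, abs_of_nonneg (besselK_nonneg _ _), abs_of_pos hw0]
  have f1 := mul_le_mul (h1 s₀ h0 s hs1 hs2) hK (besselK_nonneg _ _) (by positivity)
  have f2 := mul_le_mul_of_nonneg_left hdK hw0.le
  refine (add_le_add f1 f2).trans ?_
  set E := Real.exp (-s₀)
  have hE : 0 < E := Real.exp_pos _
  set X := s₀ ^ (μ / 2 - 1)
  set Y := s₀ ^ ((μ - 1) / 2 - a)
  set Z := s₀ ^ (μ / 2)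
  have hX : 0 < X := by positivity
  have hY : 0 < Y := by positivity
  have hZ : 0 < Z := by positivity
  calc _ = |s - s₀| * (C₁ * (C₂ * D) * (E * (W * P + W * Q)) +
        C₃ * D * (E * (s₀ ^ ((μ + 1) / 2) * P + s₀ ^ ((μ + 1) / 2) * s₀ ^ (-(a + 1))))) := by
        rw [hW]; ring
    _ = |s - s₀| * (C₁ * (C₂ * D) * (E * (X + Y)) + C₃ * D * (E * (Z + Y))) := by
        rw [e1, e2, e3, e4]
    _ ≤ |s - s₀| * (C₁ * (C₂ * D) * (E * (2 * (X + Y + Z))) +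
          C₃ * D * (E * (2 * (X + Y + Z)))) := by
        gcongr <;> linarith
    _ = _ := by ring

/-! ### The kernel and its dominating function -/

/-- The growth `e^{lX}` of `φ` against the decay `e^{-lt}` of `h`. Half of the decay `e^{-lD}`,
`D = t + 2 - X`, is spent on replacing `(1 + lX)^{-m}` by `(1 + lt)^{-m}`. -/
lemma kernel_bound {m : ℝ} (hm : 0 < m) : ∃ C > (0 : ℝ), ∀ t ≥ (0 : ℝ), ∀ X ≥ (0 : ℝ),
    X ≤ t + 1 → ∀ l : ℝ, 0 < l → l ≤ 1 →
    Real.exp (-(l * t)) * ((1 + l * X) ^ (-m) * Real.exp (l * X)) ≤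
      C * ((1 + l * t) ^ (-m) * Real.exp (-((t + 2 - X) / 2) * l)) := by
  refine ⟨2 ^ m * m ^ m * Real.exp (5 / 2), by positivity, fun t ht X hX hXt l hl hl1 => ?_⟩
  set D := t + 2 - X with hD
  have hD1 : 1 ≤ D := by linarith
  have hlD : 0 < l * D := by positivity
  have h1 : (1 + l * t) ^ m ≤ (1 + l * X) ^ m * (1 + l * D) ^ m := by
    rw [← Real.mul_rpow (by positivity) (by positivity)]
    refine Real.rpow_le_rpow (by positivity) ?_ hm.le
    have : l * t ≤ l * (X + D) := mul_le_mul_of_nonneg_left (by linarith) hl.le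
    have h' : 0 ≤ l * X * (l * D) := by positivity
    nlinarith
  have h2 : (1 + l * D) ^ m ≤ 2 ^ m * m ^ m * Real.exp ((1 + l * D) / 2) := by
    have h3 := rpow_le_mul_exp hm (x := (1 + l * D) / 2) (by positivity)
    rw [Real.div_rpow (by positivity) (by norm_num), div_le_iff₀ (by positivity)] at h3
    linarith
  have h4 : (1 + l * X) ^ (-m) ≤
      (1 + l * t) ^ (-m) * (2 ^ m * m ^ m * Real.exp ((1 + l * D) / 2)) := by
    have p1 : 0 < (1 + l * X) ^ m := by positivity
    have p2 : 0 < (1 + l * t) ^ m := by positivity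
    rw [Real.rpow_neg (by positivity), Real.rpow_neg (by positivity), inv_mul_eq_div,
      le_div_iff₀ p2, inv_mul_le_iff₀ p1]
    exact h1.trans (mul_le_mul_of_nonneg_left h2 p1.le)
  calc Real.exp (-(l * t)) * ((1 + l * X) ^ (-m) * Real.exp (l * X))
      ≤ Real.exp (-(l * t)) * ((1 + l * t) ^ (-m) *
          (2 ^ m * m ^ m * Real.exp ((1 + l * D) / 2)) * Real.exp (l * X)) := by gcongr
    _ = 2 ^ m * m ^ m * ((1 + l * t) ^ (-m) *
          (Real.exp (-(l * t)) * Real.exp ((1 + l * D) / 2) * Real.exp (l * X))) := by ring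
    _ ≤ 2 ^ m * m ^ m * ((1 + l * t) ^ (-m) *
          (Real.exp (5 / 2) * Real.exp (-(D / 2) * l))) := by
        refine mul_le_mul_of_nonneg_left (mul_le_mul_of_nonneg_left ?_ (by positivity))
          (by positivity)
        rw [← Real.exp_add, ← Real.exp_add, ← Real.exp_add]
        refine Real.exp_le_exp.2 ?_
        have : l * D = l * t + 2 * l - l * X := by rw [hD]; ring
        linarith
    _ = _ := by ring

/-- The first term on the right dominates for `y ≥ 1`; for `y ≤ 1` the second one does, where the factor
`e · e^{-y} ≥ 1` is inserted for integrability at infinity. -/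
lemma rpow_split {κ κ₀ m y : ℝ} (hκ : κ ≤ κ₀) (hm : 0 ≤ m) (hy : 0 < y) :
    y ^ κ * (1 + y) ^ (-m) ≤ y ^ (κ₀ - m) + Real.exp 1 * (y ^ κ * Real.exp (-y)) := by
  have p1 : 0 < y ^ (κ₀ - m) := by positivity
  have p2 : 0 < Real.exp 1 * (y ^ κ * Real.exp (-y)) := by positivity
  rcases le_total 1 y with h | h
  · have h1 : (1 + y) ^ (-m) ≤ y ^ (-m) :=
      Real.rpow_le_rpow_of_nonpos hy (by linarith) (by linarith)
    have h2 : y ^ κ ≤ y ^ κ₀ := Real.rpow_le_rpow_of_exponent_le h hκ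
    have h3 := mul_le_mul h2 h1 (by positivity) (by positivity)
    rw [← Real.rpow_add hy, ← sub_eq_add_neg] at h3
    linarith
  · have h1 : (1 + y) ^ (-m) ≤ 1 :=
      Real.rpow_le_one_of_one_le_of_nonpos (by linarith) (by linarith)
    have h2 : 1 ≤ Real.exp 1 * Real.exp (-y) := by
      rw [← Real.exp_add]
      exact Real.one_le_exp (by linarith)
    have h3 : 0 < y ^ κ := by positivity
    nlinarith [mul_le_mul_of_nonneg_left h1 h3.le, mul_le_mul_of_nonneg_left h2 h3.le]

/-- The dominating function for the `λ`-integral, written with `l = λ`. Its first term carries the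
region `lt ≥ 1` and the expected size `t^{κ₀-m} D^{r-1}`, its second term the region `lt ≤ 1`.
In the application `κ₀ = μ/2`, and `κ` runs over the exponents appearing in `hEPD_lipschitz`. -/
def domFun (m κ₀ r κ t D l : ℝ) : ℝ :=
  t ^ (κ₀ - m) * (l ^ (-r) * Real.exp (-(D / 2) * l)) +
    Real.exp 1 * t ^ κ * (l ^ (m - κ₀ - r + κ) * Real.exp (-t * l))

lemma domFun_nonneg {m κ₀ r κ t D l : ℝ} (ht : 0 < t) (hl : 0 < l) :
    0 ≤ domFun m κ₀ r κ t D l := by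
  unfold domFun; positivity

lemma le_domFun {m κ₀ r κ t D l : ℝ} (hκ : κ ≤ κ₀) (hm : 0 ≤ m) (hD : 0 ≤ D)
    (ht : 0 < t) (hl : 0 < l) :
    l ^ (m - κ₀ - r) * ((l * t) ^ κ * ((1 + l * t) ^ (-m) * Real.exp (-(D / 2) * l))) ≤
      domFun m κ₀ r κ t D l := by
  have hlt : 0 < l * t := by positivity
  have hE : Real.exp (-(D / 2) * l) ≤ 1 := by
    refine Real.exp_le_one_iff.2 ?_
    have : 0 ≤ D / 2 * l := by positivity
    linarith
  have h1 := mul_le_mul_of_nonneg_right (rpow_split (κ₀ := κ₀) hκ hm hlt)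
    (Real.exp_pos (-(D / 2) * l)).le
  have h2 : (l * t) ^ κ * ((1 + l * t) ^ (-m) * Real.exp (-(D / 2) * l)) ≤
      (l * t) ^ (κ₀ - m) * Real.exp (-(D / 2) * l) +
        Real.exp 1 * ((l * t) ^ κ * Real.exp (-(l * t))) := by
    have p : 0 ≤ Real.exp 1 * ((l * t) ^ κ * Real.exp (-(l * t))) := by positivity
    nlinarith [mul_le_mul_of_nonneg_left hE p]
  refine (mul_le_mul_of_nonneg_left h2 (Real.rpow_nonneg hl.le _)).trans_eq ?_
  have e1 : l ^ (-r) = l ^ (m - κ₀ - r) * l ^ (κ₀ - m) := by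
    rw [← Real.rpow_add hl]; ring_nf
  rw [domFun, e1, Real.rpow_add hl (m - κ₀ - r) κ, Real.mul_rpow hl.le ht.le,
    Real.mul_rpow hl.le ht.le]
  ring_nf

lemma integrableOn_rpow_mul_exp {a b : ℝ} (ha : -1 < a) (hb : 0 < b) :
    IntegrableOn (fun l : ℝ => l ^ a * Real.exp (-b * l)) (Set.Ioi 0) := by
  simpa using integrableOn_rpow_mul_exp_neg_mul_rpow ha one_pos hb

lemma domFun_integrable {m κ₀ r κ t D : ℝ} (hr : r < 1) (hκ : 0 < m - κ₀ - r + κ + 1)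
    (ht : 0 < t) (hD : 0 < D) : IntegrableOn (domFun m κ₀ r κ t D) (Set.Ioi 0) :=
  ((integrableOn_rpow_mul_exp (by linarith) (by positivity)).const_mul _).add
    ((integrableOn_rpow_mul_exp (by linarith) ht).const_mul _)

lemma integral_rpow_mul_exp {a b : ℝ} (ha : -1 < a) (hb : 0 < b) :
    ∫ l in Set.Ioi (0 : ℝ), l ^ a * Real.exp (-b * l) = b ^ (-(a + 1)) * Real.Gamma (a + 1) := by
  have := Real.integral_rpow_mul_exp_neg_mul_Ioi (a := a + 1) (by linarith) hb
  rw [one_div, Real.inv_rpow hb.le, ← Real.rpow_neg hb.le, add_sub_cancel_right] at this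
  simpa using this

lemma domFun_integral {m κ₀ r κ : ℝ} (hr : r < 1) (hκ : 0 < m - κ₀ - r + κ + 1) :
    ∃ C > (0 : ℝ), ∀ t ≥ (1 : ℝ), ∀ D > (0 : ℝ), D ≤ t + 2 →
    ∫ l in Set.Ioi 0, domFun m κ₀ r κ t D l ≤ C * (t ^ (κ₀ - m) * D ^ (r - 1)) := by
  set A := 2 ^ (1 - r) * Real.Gamma (1 - r)
  set B := Real.exp 1 * Real.Gamma (m - κ₀ - r + κ + 1) * 3 ^ (1 - r)
  have hA : 0 < A := mul_pos (by positivity) (Real.Gamma_pos_of_pos (by linarith))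
  have hB : 0 < B := mul_pos (mul_pos (Real.exp_pos _) (Real.Gamma_pos_of_pos hκ))
    (by positivity)
  refine ⟨A + B, by positivity, fun t ht D hD hDt => ?_⟩
  have ht0 : 0 < t := by linarith
  simp only [domFun]
  rw [integral_add ((integrableOn_rpow_mul_exp (by linarith) (by positivity)).const_mul _)
    ((integrableOn_rpow_mul_exp (by linarith) ht0).const_mul _), integral_const_mul,
    integral_const_mul, integral_rpow_mul_exp (by linarith) (by positivity),
    integral_rpow_mul_exp (by linarith) ht0, add_mul]
  refine add_le_add (le_of_eq ?_) ?_
  · have e : (D / 2) ^ (-(-r + 1)) = 2 ^ (1 - r) * D ^ (r - 1) := by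
      rw [Real.div_rpow hD.le (by norm_num), show -(-r + 1) = r - 1 by ring,
        show (1 - r) = -(r - 1) by ring, Real.rpow_neg (by norm_num : (0:ℝ) ≤ 2)]
      field_simp
    rw [e, show -r + 1 = 1 - r by ring]
    ring
  · have e : t ^ κ * t ^ (-(m - κ₀ - r + κ + 1)) = t ^ (κ₀ - m) * t ^ (r - 1) := by
      rw [← Real.rpow_add ht0, ← Real.rpow_add ht0]; ring_nf
    -- `D ≤ 3 t` and the exponent `r - 1` is negative
    have h3 : t ^ (r - 1) ≤ 3 ^ (1 - r) * D ^ (r - 1) := by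
      have h4 := Real.rpow_le_rpow_of_nonpos hD (by linarith : D ≤ 3 * t)
        (by linarith : r - 1 ≤ 0)
      rw [Real.mul_rpow (by norm_num) ht0.le, show r - 1 = -(1 - r) by ring,
        Real.rpow_neg (by norm_num : (0:ℝ) ≤ 3)] at h4
      rw [show r - 1 = -(1 - r) by ring]
      rwa [inv_mul_le_iff₀ (by positivity)] at h4
    have hG := Real.Gamma_pos_of_pos hκ
    calc _ = Real.exp 1 * Real.Gamma (m - κ₀ - r + κ + 1) *
          (t ^ κ * t ^ (-(m - κ₀ - r + κ + 1))) := by ring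
      _ = Real.exp 1 * Real.Gamma (m - κ₀ - r + κ + 1) * (t ^ (κ₀ - m) * t ^ (r - 1)) := by
          rw [e]
      _ ≤ Real.exp 1 * Real.Gamma (m - κ₀ - r + κ + 1) *
          (t ^ (κ₀ - m) * (3 ^ (1 - r) * D ^ (r - 1))) := by gcongr
      _ = _ := by ring

/-! ### Estimate of the time derivative -/

/-- The integrand of `b_q` is integrable. This is needed because the Bochner integral of a
non-integrable function is `0`, so that differences of `b_q` could not be taken under the integral. -/
lemma bq_integrand_integrable {n : ℕ} {μ q a : ℝ} (ha : |(μ - 1) / 2| < a)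
    (hq1 : 0 < q + μ / 2) (hq2 : 0 < q + (μ + 1) / 2 - a) {s : ℝ} (hs : 0 < s)
    (x : EuclideanSpace ℝ (Fin n)) :
    IntegrableOn (fun l : ℝ => hEPD μ (l * s) * phi n (l • x) * l ^ (q - 1))
      (Set.Ioc 0 1) := by
  obtain ⟨C, hC, h⟩ := hEPD_bound ha
  set S := (sphMeasure n).real Set.univ
  have hS : 0 ≤ S := measureReal_nonneg
  have hpow : ∀ b : ℝ, -1 < b → IntegrableOn (fun l : ℝ => l ^ b) (Set.Ioc 0 1) := fun b hb =>
    (intervalIntegrable_iff_integrableOn_Ioc_of_le zero_le_one).1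
      (intervalIntegral.intervalIntegrable_rpow' hb)
  refine Integrable.mono' (((hpow (q - 1 + μ / 2) (by linarith)).const_mul
    (C * (S * Real.exp ‖x‖) * s ^ (μ / 2))).add
    ((hpow (q - 1 + ((μ + 1) / 2 - a)) (by linarith)).const_mul
    (C * (S * Real.exp ‖x‖) * s ^ ((μ + 1) / 2 - a)))) ?_ ?_
  · have h1 : Measurable fun l : ℝ => hEPD μ (l * s) :=
      (hEPD_measurable μ).comp (measurable_id.mul_const s)
    have h2 : Measurable fun l : ℝ => phi n (l • x) :=
      ((phi_continuous n).comp (by fun_prop)).measurable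
    exact ((h1.mul h2).mul (measurable_id.pow_const _)).aestronglyMeasurable
  · refine (ae_restrict_iff' measurableSet_Ioc).2 (Filter.Eventually.of_forall fun l hl => ?_)
    have hl0 : 0 < l := hl.1
    have hls : 0 < l * s := by positivity
    have hphi : phi n (l • x) ≤ S * Real.exp ‖x‖ := by
      refine (phi_le_exp n _).trans (mul_le_mul_of_nonneg_left (Real.exp_le_exp.2 ?_) hS)
      rw [norm_smul, Real.norm_eq_abs, abs_of_pos hl0]
      exact mul_le_of_le_one_left (norm_nonneg _) hl.2
    rw [Real.norm_eq_abs, abs_of_nonneg (mul_nonneg (mul_nonneg (hEPD_nonneg hls.le)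
      (phi_nonneg _ _)) (Real.rpow_nonneg hl0.le _))]
    calc hEPD μ (l * s) * phi n (l • x) * l ^ (q - 1)
        ≤ C * ((l * s) ^ (μ / 2) + (l * s) ^ ((μ + 1) / 2 - a)) * (S * Real.exp ‖x‖) *
            l ^ (q - 1) := by
          refine mul_le_mul_of_nonneg_right (mul_le_mul (h _ hls) hphi (phi_nonneg _ _)
            (by positivity)) (Real.rpow_nonneg hl0.le _)
      _ = _ := by
          simp only [Pi.add_apply]
          rw [Real.mul_rpow hl0.le hs.le, Real.mul_rpow hl0.le hs.le, Real.rpow_add hl0,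
            Real.rpow_add hl0 (q - 1) ((μ + 1) / 2 - a)]
          ring

/-- Lipschitz bound in time for the integrand of `b_q`. The difference of arguments `l s - l t` supplies
the extra factor `l` that turns `l^{q-1}` into `l^q = l^{m-μ/2-r}`. -/
lemma bq_integrand_lipschitz {n : ℕ} {μ q r a : ℝ} (hn : 2 ≤ n) (ha : |(μ - 1) / 2| < a)
    (hq : q = ((n : ℝ) - 1) / 2 - μ / 2 - r) :
    ∃ C > (0 : ℝ), ∀ t ≥ (1 : ℝ), ∀ x : EuclideanSpace ℝ (Fin n), ‖x‖ ≤ t + 1 →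
      ∀ s, |s - t| ≤ 1 / 2 → ∀ l ∈ Set.Ioc (0 : ℝ) 1,
      ‖hEPD μ (l * s) * phi n (l • x) * l ^ (q - 1) -
        hEPD μ (l * t) * phi n (l • x) * l ^ (q - 1)‖ ≤ |s - t| * (C *
        (domFun (((n : ℝ) - 1) / 2) (μ / 2) r (μ / 2 - 1) t (t + 2 - ‖x‖) l +
          domFun (((n : ℝ) - 1) / 2) (μ / 2) r ((μ - 1) / 2 - a) t (t + 2 - ‖x‖) l +
          domFun (((n : ℝ) - 1) / 2) (μ / 2) r (μ / 2) t (t + 2 - ‖x‖) l)) := by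
  set m : ℝ := ((n : ℝ) - 1) / 2 with hm
  have hm0 : 0 < m := by
    have : (2 : ℝ) ≤ n := by exact_mod_cast hn
    rw [hm]; linarith
  have ha0 : 0 < a := (abs_nonneg _).trans_lt ha
  obtain ⟨C₁, hC₁, h1⟩ := hEPD_lipschitz ha
  obtain ⟨C₂, hC₂, h2⟩ := phi_bound (n := n) (by omega)
  obtain ⟨C₃, hC₃, h3⟩ := kernel_bound hm0
  refine ⟨C₁ * C₂ * C₃, by positivity, fun t ht x hx s hst l hl => ?_⟩
  obtain ⟨hl0, hl1⟩ := hl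
  obtain ⟨hs1, hs2⟩ := abs_le.1 hst
  have ht0 : 0 < t := by linarith
  have hlt : 0 < l * t := by positivity
  set X := ‖x‖ with hX
  have hX0 : 0 ≤ X := norm_nonneg _
  set D := t + 2 - X with hD
  have hD0 : 0 ≤ D := by linarith
  set K := (1 + l * t) ^ (-m) * Real.exp (-(D / 2) * l) with hK
  have hlip := h1 (l * t) hlt (l * s) (by nlinarith) (by nlinarith) (by nlinarith)
  have hphi := h2 (l • x)
  rw [norm_smul, Real.norm_eq_abs, abs_of_pos hl0, ← hX] at hphi
  have hker := h3 t ht0.le X hX0 hx l hl0 hl1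
  rw [← hD, ← hK] at hker
  have habs : |l * s - l * t| = l * |s - t| := by
    rw [← mul_sub, abs_mul, abs_of_pos hl0]
  have hlq : l * l ^ (q - 1) = l ^ (m - μ / 2 - r) := by
    rw [← hq, Real.rpow_sub_one hl0.ne']; field_simp
  set T₃ := (l * t) ^ (μ / 2 - 1) + (l * t) ^ ((μ - 1) / 2 - a) + (l * t) ^ (μ / 2) with hT
  have hT0 : 0 < T₃ := by positivity
  rw [← sub_mul, ← sub_mul, Real.norm_eq_abs, abs_mul, abs_mul,
    abs_of_nonneg (phi_nonneg n _), abs_of_pos (Real.rpow_pos_of_pos hl0 _)]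
  calc |hEPD μ (l * s) - hEPD μ (l * t)| * phi n (l • x) * l ^ (q - 1)
      ≤ (|l * s - l * t| * (C₁ * (Real.exp (-(l * t)) * T₃))) *
          (C₂ * ((1 + l * X) ^ (-m) * Real.exp (l * X))) * l ^ (q - 1) :=
        mul_le_mul_of_nonneg_right (mul_le_mul hlip hphi (phi_nonneg _ _) (by positivity))
          (Real.rpow_nonneg hl0.le _)
    _ = |s - t| * (C₁ * C₂ * ((l * l ^ (q - 1)) * (T₃ *
          (Real.exp (-(l * t)) * ((1 + l * X) ^ (-m) * Real.exp (l * X)))))) := by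
        rw [habs]; ring
    _ ≤ |s - t| * (C₁ * C₂ * ((l * l ^ (q - 1)) * (T₃ * (C₃ * K)))) := by gcongr
    _ = |s - t| * (C₁ * C₂ * C₃ * (l ^ (m - μ / 2 - r) * ((l * t) ^ (μ / 2 - 1) * K) +
          l ^ (m - μ / 2 - r) * ((l * t) ^ ((μ - 1) / 2 - a) * K) +
          l ^ (m - μ / 2 - r) * ((l * t) ^ (μ / 2) * K))) := by
        rw [hlq, hT]; ring
    _ ≤ _ := by
        have hν : (μ - 1) / 2 - a ≤ μ / 2 := by linarith
        gcongr
        · exact le_domFun (by linarith) hm0.le hD0 ht0 hl0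
        · exact le_domFun hν hm0.le hD0 ht0 hl0
        · exact le_domFun le_rfl hm0.le hD0 ht0 hl0

/-- under the assumptions `n ≥ 3, α ≥ 0` or `n = 2, α > 0`;
`0 < μ < μ*(n,α)`, `p = p_S(n+μ,α)`, `q = (n−μ−1)/2 − 1/p`, there is `C > 0` such
that for all `t ≥ 1` and `|x| ≤ t+1`:
`|∂_t b_q(t,x)| ≤ C t^{μ/2 − (n−1)/2} (t+2−|x|)^{1/p − 1}`. -/
theorem bq_time_derivative_bound (n : ℕ) (α μ p q : ℝ)
    (hnα : (3 ≤ n ∧ 0 ≤ α) ∨ (n = 2 ∧ 0 < α))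
    (hμ0 : 0 < μ) (hμ : μ < muStar n α)
    (hp : p = pS ((n : ℝ) + μ) α)
    (hq : q = ((n : ℝ) - μ - 1) / 2 - 1 / p) :
    ∃ C > (0 : ℝ), ∀ t ≥ (1 : ℝ), ∀ x : EuclideanSpace ℝ (Fin n), ‖x‖ ≤ t + 1 →
      |deriv (fun s => bq n μ q s x) t|
        ≤ C * t ^ (μ / 2 - ((n : ℝ) - 1) / 2) * (t + 2 - ‖x‖) ^ (1 / p - 1) := by
  obtain ⟨hr1, hq1, hqμ, hqμ2⟩ := exponent_facts n α μ p q hnα hμ0 hμ hp hq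
  have hn2 : 2 ≤ n := by omega
  set r := 1 / p with hr
  set m : ℝ := ((n : ℝ) - 1) / 2 with hm
  have hq' : q = m - μ / 2 - r := by rw [hq, hm]; ring
  -- a loss `ε` in the order of the singularity of `K_ν` at `0`, small enough that
  -- `λ ^ q * λ ^ (ν - |ν| - ε)` is still integrable at `0`
  obtain ⟨ε, hε, hε1, hε2⟩ : ∃ ε > 0, ε < q + 1 ∧ ε < q + μ :=
    ⟨min (q + 1) (q + μ) / 2, by positivity,
      by linarith [min_le_left (q + 1) (q + μ), lt_min hq1 hqμ],
      by linarith [min_le_right (q + 1) (q + μ), lt_min hq1 hqμ]⟩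
  set a := |(μ - 1) / 2| + ε with ha_def
  have ha : |(μ - 1) / 2| < a := by linarith
  have hqa : 0 < q + (μ + 1) / 2 - a := by
    rcases abs_cases ((μ - 1) / 2) with h | h <;> rw [ha_def, h.1] <;> linarith
  have k1 : 0 < m - μ / 2 - r + (μ / 2 - 1) + 1 := by rw [← hq']; linarith
  have k2 : 0 < m - μ / 2 - r + ((μ - 1) / 2 - a) + 1 := by rw [← hq']; linarith
  have k3 : 0 < m - μ / 2 - r + μ / 2 + 1 := by rw [← hq']; linarith
  obtain ⟨C₀, hC₀, hlip⟩ := bq_integrand_lipschitz (r := r) hn2 ha hq'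
  obtain ⟨C₁, hC₁, h1⟩ := domFun_integral hr1 k1
  obtain ⟨C₂, hC₂, h2⟩ := domFun_integral hr1 k2
  obtain ⟨C₃, hC₃, h3⟩ := domFun_integral hr1 k3
  refine ⟨C₀ * (C₁ + C₂ + C₃), by positivity, fun t ht x hx => ?_⟩
  have ht0 : 0 < t := by linarith
  have hlipx := hlip t ht x hx
  rw [← hm] at hlipx
  set D := t + 2 - ‖x‖ with hD
  have hD0 : 0 < D := by linarith
  have hDt : D ≤ t + 2 := by linarith [norm_nonneg x]
  rw [← Real.norm_eq_abs]
  refine norm_deriv_le_of_lip' (by positivity) ?_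
  filter_upwards [Metric.closedBall_mem_nhds t (show (0 : ℝ) < 1 / 2 by norm_num)] with s hs
  rw [Metric.mem_closedBall, Real.dist_eq] at hs
  have hs0 : 0 < s := by linarith [(abs_le.1 hs).1]
  set g : ℝ → ℝ := fun l => domFun m (μ / 2) r (μ / 2 - 1) t D l +
    domFun m (μ / 2) r ((μ - 1) / 2 - a) t D l + domFun m (μ / 2) r (μ / 2) t D l with hg
  have i1 := domFun_integrable hr1 k1 ht0 hD0
  have i2 := domFun_integrable hr1 k2 ht0 hD0
  have i3 := domFun_integrable hr1 k3 ht0 hD0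
  have hgi : IntegrableOn g (Set.Ioi 0) := (i1.add i2).add i3
  have hG : ∫ l in Set.Ioi 0, g l ≤ (C₁ + C₂ + C₃) * (t ^ (μ / 2 - m) * D ^ (r - 1)) := by
    have e1 := integral_add (i1.add i2) i3
    have e2 := integral_add i1 i2
    simp only [Pi.add_apply] at e1
    rw [hg, e1, e2]
    linarith [h1 t ht D hD0 hDt, h2 t ht D hD0 hDt, h3 t ht D hD0 hDt]
  have hsub : Set.Ioc (0 : ℝ) 1 ⊆ Set.Ioi 0 := fun l hl => hl.1
  have hG1 : ∫ l in Set.Ioc 0 1, g l ≤ ∫ l in Set.Ioi 0, g l := by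
    refine setIntegral_mono_set hgi ?_ hsub.eventuallyLE
    refine (ae_restrict_iff' measurableSet_Ioi).2 (Filter.Eventually.of_forall fun l hl => ?_)
    exact add_nonneg (add_nonneg (domFun_nonneg ht0 hl) (domFun_nonneg ht0 hl))
      (domFun_nonneg ht0 hl)
  rw [bq, bq, ← integral_sub (bq_integrand_integrable ha hqμ2 hqa hs0 x)
    (bq_integrand_integrable ha hqμ2 hqa ht0 x)]
  calc _ ≤ ∫ l in Set.Ioc 0 1, |s - t| * (C₀ * g l) := by
        refine norm_integral_le_of_norm_le
          (((hgi.mono_set hsub).const_mul _).const_mul _) ?_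
        exact (ae_restrict_iff' measurableSet_Ioc).2
          (Filter.Eventually.of_forall fun l hl => hlipx s hs l hl)
    _ = |s - t| * (C₀ * ∫ l in Set.Ioc 0 1, g l) := by
        rw [integral_const_mul, integral_const_mul]
    _ ≤ |s - t| * (C₀ * ((C₁ + C₂ + C₃) * (t ^ (μ / 2 - m) * D ^ (r - 1)))) := by
        gcongr
        exact hG1.trans hG
    _ = _ := by rw [Real.norm_eq_abs]; ring
end
end

section
/- Let p > 1 and c, δ > 0. There exists a constant C > 0 depending only on p and c with the following property: if T > 16 and Y : [2,T) → ℝ is a nonnegative C¹ function such that Y(t) ≥ δ ln t for all t ∈ (4,T) and t Y'(t) ≥ c (ln t)^{1−p} Y(t)^p for all t ∈ (4,T), then ln T ≤ C (1 + δ^{−(p−1)}). -/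
/-!
In the variable `s = ln t` the hypothesis reads `y' ≥ c s^{1-p} y^p`, that is,
`(y^{1-p})' ≤ -(p-1) c s^{1-p}`. Put `L = ln T`. For `s ≤ L` one has `s^{1-p} ≥ L^{1-p}`, so
`y^{1-p} + (p-1) c L^{1-p} s` is nonincreasing. Comparing its values at `s = L/2` and as `s → L`,
and using `y(L/2) ≥ δ L/2`, gives `(p-1) c L^{1-p} · L/2 ≤ (δ L/2)^{1-p}`. The factor `L^{1-p}`
cancels, and `L ≤ 2^p / ((p-1) c) · δ^{-(p-1)}` follows. The condition `T > 16` is what puts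
`√T`, the point with logarithm `L/2`, inside `(4,T)`.
-/

open Filter Topology in
/-- The integrated inequality on `[a, T)`: `t ↦ Y(t)^{1-p} + (p-1) c (ln T)^{1-p} ln t` is
nonincreasing there, and the bound is obtained in the limit `t → T`. -/
lemma integrated_bound {p c T a : ℝ} {Y Y' : ℝ → ℝ} (hp : 1 < p) (hc : 0 < c)
    (ha : 1 < a) (haT : a < T)
    (hY : ∀ t ∈ Set.Ico a T, HasDerivAt Y (Y' t) t)
    (hpos : ∀ t ∈ Set.Ico a T, 0 < Y t)
    (hode : ∀ t ∈ Set.Ico a T, c * Real.log t ^ (1 - p) * Y t ^ p ≤ t * Y' t) :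
    (p - 1) * c * Real.log T ^ (1 - p) * (Real.log T - Real.log a) ≤ Y a ^ (1 - p) := by
  set k := (p - 1) * c * Real.log T ^ (1 - p) with hk
  have hG : ∀ t ∈ Set.Ico a T, HasDerivAt (fun t => Y t ^ (1 - p) + k * Real.log t)
      (Y' t * (1 - p) * Y t ^ (1 - p - 1) + k * t⁻¹) t := fun t ht =>
    ((hY t ht).rpow_const (Or.inl (hpos t ht).ne')).add
      ((Real.hasDerivAt_log (by linarith [ht.1])).const_mul k)
  have hanti : AntitoneOn (fun t => Y t ^ (1 - p) + k * Real.log t) (Set.Ico a T) := by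
    refine antitoneOn_of_deriv_nonpos (convex_Ico a T)
      (fun t ht => (hG t ht).continuousAt.continuousWithinAt)
      (fun t ht => (hG t (interior_subset ht)).differentiableAt.differentiableWithinAt) ?_
    intro t ht
    replace ht := interior_subset ht
    rw [(hG t ht).deriv]
    have ht0 : 0 < t := by linarith [ht.1]
    have hlog : 0 < Real.log t := Real.log_pos (by linarith [ht.1])
    have hmono : Real.log T ^ (1 - p) ≤ Real.log t ^ (1 - p) :=
      Real.rpow_le_rpow_of_nonpos hlog (Real.log_le_log ht0 ht.2.le) (by linarith)
    have hYp : 0 < Y t ^ p := Real.rpow_pos_of_pos (hpos t ht) p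
    have hlow : c * Real.log T ^ (1 - p) * Y t ^ p ≤ t * Y' t :=
      le_trans (by gcongr) (hode t ht)
    have hexp : Y t ^ (1 - p - 1) = (Y t ^ p)⁻¹ := by
      rw [← Real.rpow_neg (hpos t ht).le]; congr 1; ring
    have hrw : Y' t * (1 - p) * Y t ^ (1 - p - 1) + k * t⁻¹ =
        -((p - 1) * (t * Y' t - c * Real.log T ^ (1 - p) * Y t ^ p)) / (t * Y t ^ p) := by
      rw [hexp, hk]; field_simp; ring
    rw [hrw]
    exact div_nonpos_of_nonpos_of_nonneg
      (neg_nonpos.2 (mul_nonneg (by linarith) (sub_nonneg.2 hlow))) (by positivity)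
  have hev : ∀ᶠ t in 𝓝[<] T, k * (Real.log t - Real.log a) ≤ Y a ^ (1 - p) := by
    filter_upwards [Ico_mem_nhdsLT haT] with t ht
    have h1 := hanti (Set.left_mem_Ico.2 haT) ht ht.1
    have h2 := Real.rpow_nonneg (hpos t ht).le (1 - p)
    simp only at h1
    linarith
  have hlim : Tendsto (fun t => k * (Real.log t - Real.log a)) (𝓝[<] T)
      (𝓝 (k * (Real.log T - Real.log a))) :=
    (((Real.continuousAt_log (by linarith)).tendsto.sub_const _).const_mul k).mono_left
      nhdsWithin_le_nhds
  exact le_of_tendsto hlim hev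

/-- ODE lemma. For `p > 1` and `c > 0` there is `C > 0` (depending only
on `p` and `c`) such that: for every `δ > 0`, every `T > 16`, and every nonnegative `C¹`
function `Y : [2,T) → ℝ` with `Y(t) ≥ δ ln t` and `t Y'(t) ≥ c (ln t)^{1−p} Y(t)^p`
on `(4,T)`, one has `ln T ≤ C (1 + δ^{−(p−1)})`. -/
theorem ode_lemma (p c : ℝ) (hp : 1 < p) (hc : 0 < c) :
    ∃ C > (0 : ℝ), ∀ δ > (0 : ℝ), ∀ T > (16 : ℝ), ∀ Y Y' : ℝ → ℝ,
      (∀ t ∈ Set.Ico (2 : ℝ) T, HasDerivAt Y (Y' t) t) →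
      ContinuousOn Y' (Set.Ico 2 T) →
      (∀ t ∈ Set.Ico (2 : ℝ) T, 0 ≤ Y t) →
      (∀ t ∈ Set.Ioo (4 : ℝ) T, δ * Real.log t ≤ Y t) →
      (∀ t ∈ Set.Ioo (4 : ℝ) T, c * Real.log t ^ (1 - p) * Y t ^ p ≤ t * Y' t) →
      Real.log T ≤ C * (1 + δ ^ (-(p - 1))) := by
  have hp1 : 0 < p - 1 := by linarith
  refine ⟨2 ^ p / ((p - 1) * c), by positivity, ?_⟩
  intro δ hδ T hT Y Y' hY _ _ hlow hode
  have hT0 : 0 < T := by linarith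
  have ha4 : 4 < √T := Real.lt_sqrt_of_sq_lt (by linarith)
  have haT : √T < T := by nlinarith [Real.sq_sqrt hT0.le]
  have hmem : ∀ t ∈ Set.Ico (√T) T, t ∈ Set.Ioo (4 : ℝ) T := fun t ht =>
    ⟨by linarith [ht.1], ht.2⟩
  have hL : 0 < Real.log T := Real.log_pos (by linarith)
  have hloga : Real.log (√T) = Real.log T / 2 := Real.log_sqrt hT0.le
  have hb := integrated_bound hp hc (by linarith) haT
    (fun t ht => hY t ⟨by linarith [ht.1], ht.2⟩)
    (fun t ht => lt_of_lt_of_le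
      (mul_pos hδ (Real.log_pos (by linarith [ht.1]))) (hlow t (hmem t ht)))
    (fun t ht => hode t (hmem t ht))
  have hYa := hlow _ (hmem _ (Set.left_mem_Ico.2 haT))
  rw [hloga] at hb hYa
  set L := Real.log T
  have h1 : Y (√T) ^ (1 - p) ≤ (δ * (L / 2)) ^ (1 - p) :=
    Real.rpow_le_rpow_of_nonpos (by positivity) hYa (by linarith)
  have h2 : (δ * (L / 2)) ^ (1 - p) = δ ^ (-(p - 1)) * L ^ (1 - p) * (2 ^ p / 2) := by
    have h2p : (2 : ℝ) ^ (1 - p) = 2 / 2 ^ p := by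
      rw [Real.rpow_sub two_pos, Real.rpow_one]
    rw [Real.mul_rpow hδ.le (by positivity), Real.div_rpow hL.le two_pos.le, h2p, neg_sub]
    field_simp
  have hLp : 0 < L ^ (1 - p) := Real.rpow_pos_of_pos hL _
  have h3 : (p - 1) * c * L ≤ 2 ^ p * δ ^ (-(p - 1)) := by
    refine le_of_mul_le_mul_left ?_ hLp
    linarith [hb.trans (h1.trans h2.le)]
  have h2pos : (0 : ℝ) < 2 ^ p := by positivity
  rw [div_mul_eq_mul_div, le_div_iff₀ (by positivity)]
  linarith
end
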